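/- Every nonexpansive simple, properly ordered Bratteli-Vershik system is conjugate to a well timed system or conjugate to an untimed system, and not both; that is, the family of nonexpansive systems is the disjoint union of the class of systems conjugate to a well timed system and the class of systems conjugate to an untimed system. -/

import Mathlib

set_option autoImplicit false

/-- An ordered Bratteli diagram: finite nonempty vertex sets `V n`, a single root
vertex at level `0`, finite edge sets `E n` (edges from level `n` to level `n+1`,
multiple edges allowed), every vertex has an outgoing edge, every non-root vertex
an incoming edge, and the edges into each vertex carry a linear order, encoded by
the relation `elt` which relates only edges with the same target. -/
structure BDiagram where
  V : ℕ → Type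
  E : ℕ → Type
  fintV : ∀ n, Fintype (V n)
  fintE : ∀ n, Fintype (E n)
  nonV : ∀ n, Nonempty (V n)
  rootSubsingleton : Subsingleton (V 0)
  src : ∀ {n}, E n → V n
  tgt : ∀ {n}, E n → V (n + 1)
  hasOut : ∀ (n : ℕ) (v : V n), ∃ e : E n, src e = v
  hasIn : ∀ (n : ℕ) (v : V (n + 1)), ∃ e : E n, tgt e = v
  elt : ∀ {n}, E n → E n → Prop
  elt_tgt : ∀ (n : ℕ) (e f : E n), elt e f → tgt e = tgt f
  elt_irrefl : ∀ (n : ℕ) (e : E n), ¬ elt e e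
  elt_trans : ∀ (n : ℕ) (e f g : E n), elt e f → elt f g → elt e g
  elt_total : ∀ (n : ℕ) (e f : E n), tgt e = tgt f → e ≠ f → elt e f ∨ elt f e

namespace BDiagram

variable (B : BDiagram)

def castV {m n : ℕ} (h : m = n) (v : B.V m) : B.V n := h ▸ v

/-- An edge is minimal if no edge (into the same target) is below it. -/
def IsMinEdge {n : ℕ} (e : B.E n) : Prop := ∀ e' : B.E n, ¬ B.elt e' e

/-- An edge is maximal if no edge (into the same target) is above it. -/
def IsMaxEdge {n : ℕ} (e : B.E n) : Prop := ∀ e' : B.E n, ¬ B.elt e e'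

/-- The space of infinite paths from the root. -/
def PathSpace : Type := { x : ∀ n, B.E n // ∀ n, B.tgt (x n) = B.src (x (n + 1)) }

def IsMinPath (x : B.PathSpace) : Prop := ∀ n, B.IsMinEdge (x.1 n)

def IsMaxPath (x : B.PathSpace) : Prop := ∀ n, B.IsMaxEdge (x.1 n)

/-- Properly ordered: unique minimal and unique maximal path. -/
def ProperlyOrdered : Prop :=
  (∃! x : B.PathSpace, B.IsMinPath x) ∧ (∃! x : B.PathSpace, B.IsMaxPath x)

/-- The partial order on cofinal paths: `x < y` iff they eventually agree and at the
last disagreement the edge of `x` is below the edge of `y`. -/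
def pathLT (x y : B.PathSpace) : Prop :=
  ∃ N : ℕ, B.elt (x.1 N) (y.1 N) ∧ ∀ n : ℕ, N < n → x.1 n = y.1 n

/-- `T` is the Vershik map: each non-maximal path goes to its successor, and each
maximal path goes to a minimal path. -/
def IsVershik (T : B.PathSpace ≃ B.PathSpace) : Prop :=
  (∀ x : B.PathSpace, ¬ B.IsMaxPath x →
    B.pathLT x (T x) ∧ ∀ z : B.PathSpace, B.pathLT x z → ¬ B.pathLT z (T x)) ∧
  (∀ x : B.PathSpace, B.IsMaxPath x → B.IsMinPath (T x))

/-- `f` is a chain of consecutive edges on levels `[a, b)`. -/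
def SegOn (f : ∀ i, B.E i) (a b : ℕ) : Prop :=
  ∀ i : ℕ, a ≤ i → i + 1 < b → B.tgt (f i) = B.src (f (i + 1))

/-- Simplicity: some telescoping has complete connections between adjacent levels. -/
def Simple : Prop :=
  ∃ ns : ℕ → ℕ, StrictMono ns ∧ ns 0 = 0 ∧
    ∀ (l c : ℕ), ns (l + 1) = c + 1 →
      ∀ (v : B.V (ns l)) (w : B.V (c + 1)),
        ∃ f : ∀ i, B.E i, B.SegOn f (ns l) (c + 1) ∧ B.src (f (ns l)) = v ∧ B.tgt (f c) = w

/-- The natural (Cantor) topology on the path space, induced from the product of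
the discrete topologies on the edge sets. -/
def pathTop : TopologicalSpace B.PathSpace :=
  TopologicalSpace.induced Subtype.val (@Pi.topologicalSpace ℕ B.E (fun _ => ⊥))

/-- Integer iterates of a bijection of the path space. -/
def iterZ (T : B.PathSpace ≃ B.PathSpace) (m : ℤ) : B.PathSpace ≃ B.PathSpace :=
  (T : Equiv.Perm B.PathSpace) ^ m

/-- Two paths have the same `k`-coding: for every time `m` the initial segments of
`T^m x` and `T^m y` from the root to level `k` coincide. -/
def SameCoding (T : B.PathSpace ≃ B.PathSpace) (k : ℕ) (x y : B.PathSpace) : Prop :=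
  ∀ (m : ℤ) (i : ℕ), i < k → ((B.iterZ T m) x).1 i = ((B.iterZ T m) y).1 i

/-- A depth `k` pair: distinct paths with the same `k`-coding but not the same
`(k+1)`-coding. -/
def DepthPair (T : B.PathSpace ≃ B.PathSpace) (k : ℕ) (x y : B.PathSpace) : Prop :=
  x ≠ y ∧ B.SameCoding T k x y ∧ ¬ B.SameCoding T (k + 1) x y

/-- The pair `x, y` has a `j` cut: for some time `m`, both `T^m x` and `T^m y` are
minimal from the root into level `j`. -/
def HasCut (T : B.PathSpace ≃ B.PathSpace) (j : ℕ) (x y : B.PathSpace) : Prop :=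
  ∃ m : ℤ, (∀ i : ℕ, i < j → B.IsMinEdge (((B.iterZ T m) x).1 i)) ∧
    (∀ i : ℕ, i < j → B.IsMinEdge (((B.iterZ T m) y).1 i))

/-- Nonexpansive: for every `k ≥ 1` there are two distinct paths with the same
`k`-coding. -/
def Nonexpansive (T : B.PathSpace ≃ B.PathSpace) : Prop :=
  ∀ k : ℕ, 1 ≤ k → ∃ x y : B.PathSpace, x ≠ y ∧ B.SameCoding T k x y

/-- Well timed: for every `k ≥ 1` and every `j > k` there is a depth `k` pair with
a `j` cut. -/
def WellTimed (T : B.PathSpace ≃ B.PathSpace) : Prop :=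
  ∀ k : ℕ, 1 ≤ k → ∀ j : ℕ, k < j →
    ∃ x y : B.PathSpace, B.DepthPair T k x y ∧ B.HasCut T j x y

/-- Very well timed: for every `k ≥ 1` there is a depth `k` pair having a `j` cut
for every `j > k`. -/
def VeryWellTimed (T : B.PathSpace ≃ B.PathSpace) : Prop :=
  ∀ k : ℕ, 1 ≤ k →
    ∃ x y : B.PathSpace, B.DepthPair T k x y ∧ ∀ j : ℕ, k < j → B.HasCut T j x y

/-- Weakly well timed: for infinitely many `k ≥ 1`, for every `j > k` there is a
depth `k` pair with a `j` cut. -/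
def WeaklyWellTimed (T : B.PathSpace ≃ B.PathSpace) : Prop :=
  ∀ K : ℕ, ∃ k : ℕ, K ≤ k ∧ 1 ≤ k ∧ ∀ j : ℕ, k < j →
    ∃ x y : B.PathSpace, B.DepthPair T k x y ∧ B.HasCut T j x y

/-- Untimed: for every `k ≥ 1` there is a `j > k` such that no depth `k` pair has a
`j` cut. -/
def Untimed (T : B.PathSpace ≃ B.PathSpace) : Prop :=
  ∀ k : ℕ, 1 ≤ k → ∃ j : ℕ, k < j ∧
    ∀ x y : B.PathSpace, B.DepthPair T k x y → ¬ B.HasCut T j x y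

/-- Very untimed: for every `k ≥ 1`, no depth `k` pair has a `(k+1)` cut. -/
def VeryUntimed (T : B.PathSpace ≃ B.PathSpace) : Prop :=
  ∀ k : ℕ, 1 ≤ k →
    ∀ x y : B.PathSpace, B.DepthPair T k x y → ¬ B.HasCut T (k + 1) x y

/-- Finite paths from the root to level `n`. -/
def FinPath (n : ℕ) : Type :=
  { f : (i : Fin n) → B.E i.val //
    ∀ (i : ℕ) (h : i + 1 < n), B.tgt (f ⟨i, by omega⟩) = B.src (f ⟨i + 1, h⟩) }

/-- The lexicographic (from the end) order on finite paths to level `n` induced by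
the orders on the edges. -/
def finLT {n : ℕ} (p q : B.FinPath n) : Prop :=
  ∃ (N : ℕ) (h : N < n), B.elt (p.1 ⟨N, h⟩) (q.1 ⟨N, h⟩) ∧
    ∀ (i : ℕ) (hi : i < n), N < i → p.1 ⟨i, hi⟩ = q.1 ⟨i, hi⟩

/-- The finite path `p` to level `n` ends at the vertex `v`. -/
def EndsAt {n : ℕ} (p : B.FinPath n) (v : B.V n) : Prop :=
  ∀ (m : ℕ) (h : n = m + 1), B.tgt (p.1 ⟨m, by omega⟩) = B.castV h v

/-- The initial segment of an infinite path, from the root to level `n`. -/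
def pathInit (x : B.PathSpace) (n : ℕ) : B.FinPath n :=
  ⟨fun i => x.1 i.val, fun i _ => x.2 i⟩

/-- The vertex of an infinite path at level `n`. -/
def pathVert (x : B.PathSpace) (n : ℕ) : B.V n := B.src (x.1 n)

theorem pathInit_endsAt (x : B.PathSpace) (n : ℕ) :
    B.EndsAt (B.pathInit x n) (B.pathVert x n) := by
  intro m h
  subst h
  exact x.2 m

/-- Truncation of a finite path to a lower level. -/
def truncTo {n : ℕ} (k : ℕ) (hk : k ≤ n) (p : B.FinPath n) : B.FinPath k :=
  ⟨fun i => p.1 ⟨i.val, by omega⟩, fun i h => p.2 i (by omega)⟩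

/-- Paths `x, x'` are `k`-equivalent at level `n`: there is an order isomorphism
between the sets of finite paths from the root into their level-`n` vertices which
preserves truncations to level `k` (equality of `k`-basic blocks) and which matches
the initial segment of `x` with the initial segment of `x'` (the "dot" is in the
same place). -/
def KEquivAt (k n : ℕ) (x x' : B.PathSpace) : Prop :=
  ∃ φ : { p : B.FinPath n // B.EndsAt p (B.pathVert x n) } ≃
      { p : B.FinPath n // B.EndsAt p (B.pathVert x' n) },
    (∀ p q, B.finLT p.1 q.1 ↔ B.finLT (φ p).1 (φ q).1) ∧
    (∀ p (i : ℕ) (hik : i < k) (hin : i < n), ((φ p).1).1 ⟨i, hin⟩ = (p.1).1 ⟨i, hin⟩) ∧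
    φ ⟨B.pathInit x n, B.pathInit_endsAt x n⟩ = ⟨B.pathInit x' n, B.pathInit_endsAt x' n⟩

/-- Paths are `k`-equivalent: they agree from the root to level `k` and are
`k`-equivalent at every level `n > k`. -/
def KEquivPaths (k : ℕ) (x x' : B.PathSpace) : Prop :=
  (∀ i : ℕ, i < k → x.1 i = x'.1 i) ∧ ∀ n : ℕ, k < n → B.KEquivAt k n x x'

/-- Standard nonexpansive: for every `k ≥ 1` there is a pair of distinct
`k`-equivalent paths. -/
def SNE : Prop := ∀ k : ℕ, 1 ≤ k → ∃ x x' : B.PathSpace, x ≠ x' ∧ B.KEquivPaths k x x'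

/-!  ### Telescoping  -/

theorem castV_eq_of_heq {m n : ℕ} (h : m = n) {v : B.V m} {w : B.V n} (hw : HEq v w) :
    B.castV h v = w := by
  subst h
  exact eq_of_heq hw

theorem castV_heq {m n : ℕ} (h : m = n) (v : B.V m) : HEq (B.castV h v) v := by
  subst h
  rfl

theorem castV_inj {m n : ℕ} (h : m = n) {v w : B.V m}
    (hvw : B.castV h v = B.castV h w) : v = w := by
  subst h
  exact hvw

def castE {m n : ℕ} (h : m = n) (e : B.E m) : B.E n := h ▸ e

noncomputable def chainFrom (a : ℕ) (v : B.V a) : (i : ℕ) → B.E (a + i)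
  | 0 => (B.hasOut a v).choose
  | i + 1 => (B.hasOut (a + i + 1) (B.tgt (chainFrom a v i))).choose

theorem chainFrom_src_zero (a : ℕ) (v : B.V a) : B.src (B.chainFrom a v 0) = v :=
  (B.hasOut a v).choose_spec

theorem chainFrom_src_succ (a : ℕ) (v : B.V a) (i : ℕ) :
    B.src (B.chainFrom a v (i + 1)) = B.tgt (B.chainFrom a v i) :=
  (B.hasOut (a + i + 1) (B.tgt (B.chainFrom a v i))).choose_spec

noncomputable def chainTo (a : ℕ) : (j : ℕ) → (w : B.V (a + j + 1)) → (i : ℕ) → i ≤ j → B.E (a + i)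
  | 0, w, i, _ => B.castE (by omega : a + 0 = a + i) (B.hasIn a w).choose
  | j + 1, w, i, _ =>
      if h : i ≤ j then chainTo a j (B.src (B.hasIn (a + j + 1) w).choose) i h
      else B.castE (by omega : a + (j + 1) = a + i) (B.hasIn (a + j + 1) w).choose

theorem chainTo_tgt_last (a : ℕ) : ∀ (j : ℕ) (w : B.V (a + j + 1)),
    B.tgt (B.chainTo a j w j le_rfl) = w := by
  intro j w
  cases j with
  | zero =>
      simp only [chainTo]
      exact (B.hasIn a w).choose_spec
  | succ j =>
      simp only [chainTo]
      rw [dif_neg (by omega : ¬ j + 1 ≤ j)]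
      exact (B.hasIn (a + j + 1) w).choose_spec

theorem chainTo_chain (a : ℕ) : ∀ (j : ℕ) (w : B.V (a + j + 1)) (i : ℕ) (h : i + 1 ≤ j)
    (h' : i ≤ j), B.tgt (B.chainTo a j w i h') = B.src (B.chainTo a j w (i + 1) h) := by
  intro j
  induction j with
  | zero => intro w i h h'; omega
  | succ j ih =>
      intro w i h h'
      by_cases hij : i + 1 ≤ j
      · simp only [chainTo]
        rw [dif_pos (by omega : i ≤ j), dif_pos hij]
        exact ih _ i hij (by omega)
      · have hi : i = j := by omega
        subst hi
        simp only [chainTo]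
        rw [dif_pos (le_refl i), dif_neg (by omega : ¬ i + 1 ≤ i)]
        exact B.chainTo_tgt_last a i _


def TelE (a b : ℕ) : Type :=
  { f : (i : Fin (b - a)) → B.E (a + i.val) //
    ∀ (i : ℕ) (h : i + 1 < b - a), B.tgt (f ⟨i, by omega⟩) = B.src (f ⟨i + 1, h⟩) }

def telSrc {a b : ℕ} (hab : a < b) (f : B.TelE a b) : B.V a :=
  B.src (f.1 ⟨0, by omega⟩)

def telTgt {a b : ℕ} (hab : a < b) (f : B.TelE a b) : B.V b :=
  B.castV (by omega : a + (b - a - 1) + 1 = b) (B.tgt (f.1 ⟨b - a - 1, by omega⟩))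

def telLT {a b : ℕ} (f g : B.TelE a b) : Prop :=
  ∃ (N : ℕ) (h : N < b - a), B.elt (f.1 ⟨N, h⟩) (g.1 ⟨N, h⟩) ∧
    ∀ (i : ℕ) (hi : i < b - a), N < i → f.1 ⟨i, hi⟩ = g.1 ⟨i, hi⟩

noncomputable def Telescope (ns : ℕ → ℕ) (hmono : StrictMono ns) (h0 : ns 0 = 0) : BDiagram where
  V l := B.V (ns l)
  E l := B.TelE (ns l) (ns (l + 1))
  fintV l := B.fintV (ns l)
  fintE l := by
    classical
    letI : ∀ i : Fin (ns (l + 1) - ns l), Fintype (B.E (ns l + i.val)) := fun i => B.fintE _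
    exact Subtype.fintype _
  nonV l := B.nonV (ns l)
  rootSubsingleton := by show Subsingleton (B.V (ns 0)); rw [h0]; exact B.rootSubsingleton
  src {l} f := B.telSrc (hmono (Nat.lt_succ_self l)) f
  tgt {l} f := B.telTgt (hmono (Nat.lt_succ_self l)) f
  hasOut := by
    intro l v
    refine ⟨⟨fun i => B.chainFrom (ns l) v i.val,
      fun i h => (B.chainFrom_src_succ (ns l) v i).symm⟩, ?_⟩
    exact B.chainFrom_src_zero (ns l) v
  hasIn := by
    intro l w
    have hab : ns l < ns (l + 1) := hmono (Nat.lt_succ_self l)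
    have hj : ns l + (ns (l + 1) - ns l - 1) + 1 = ns (l + 1) := by omega
    refine ⟨⟨fun i => B.chainTo (ns l) (ns (l + 1) - ns l - 1) (B.castV hj.symm w) i.val
        (by omega), fun i h => B.chainTo_chain _ _ _ i (by omega) (by omega)⟩, ?_⟩
    show B.castV (by omega) (B.tgt (B.chainTo (ns l) (ns (l + 1) - ns l - 1)
      (B.castV hj.symm w) (ns (l + 1) - ns l - 1) (by omega))) = w
    rw [B.chainTo_tgt_last]
    exact B.castV_eq_of_heq _ (B.castV_heq _ w)
  elt {l} f g := B.telLT f g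
  elt_tgt := by
    rintro l f g ⟨N, hN, hlt, hgt⟩
    show B.telTgt _ f = B.telTgt _ g
    unfold telTgt
    refine congrArg (B.castV _) ?_
    rcases eq_or_lt_of_le (show N ≤ ns (l + 1) - ns l - 1 by omega) with h | h
    · subst h
      exact B.elt_tgt _ _ _ hlt
    · exact congrArg B.tgt (hgt _ (by omega) h)
  elt_irrefl := by
    rintro l f ⟨N, h, hlt, -⟩
    exact B.elt_irrefl _ _ hlt
  elt_trans := by
    rintro l f g h ⟨N₁, hN₁, hlt₁, hgt₁⟩ ⟨N₂, hN₂, hlt₂, hgt₂⟩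
    rcases lt_trichotomy N₁ N₂ with hc | hc | hc
    · exact ⟨N₂, hN₂, by rw [hgt₁ N₂ hN₂ hc]; exact hlt₂,
        fun i hi hN => (hgt₁ i hi (by omega)).trans (hgt₂ i hi hN)⟩
    · subst hc
      exact ⟨N₁, hN₁, B.elt_trans _ _ _ _ hlt₁ hlt₂,
        fun i hi hN => (hgt₁ i hi hN).trans (hgt₂ i hi hN)⟩
    · refine ⟨N₁, hN₁, ?_, fun i hi hN => (hgt₁ i hi hN).trans (hgt₂ i hi (by omega))⟩
      rw [← hgt₂ N₁ hN₁ hc]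
      exact hlt₁
  elt_total := by
    intro l f g htgt hne
    classical
    have hab : ns l < ns (l + 1) := hmono (Nat.lt_succ_self l)
    set b := ns (l + 1) - ns l with hb
    have hex : ∃ N, ∃ h : N < b, f.1 ⟨N, h⟩ ≠ g.1 ⟨N, h⟩ := by
      by_contra hco
      push_neg at hco
      exact hne (Subtype.ext (funext fun i => hco i.val i.isLt))
    set P : ℕ → Prop := fun N => ∃ h : N < b, f.1 ⟨N, h⟩ ≠ g.1 ⟨N, h⟩ with hP
    obtain ⟨N₀, hN₀⟩ := hex
    set N := Nat.findGreatest P b with hNdef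
    have hPN : P N := Nat.findGreatest_spec (le_of_lt hN₀.choose) hN₀
    have hafter : ∀ i (hi : i < b), N < i → f.1 ⟨i, hi⟩ = g.1 ⟨i, hi⟩ := by
      intro i hi hNi
      by_contra hcon
      exact Nat.findGreatest_is_greatest hNi (le_of_lt hi) ⟨hi, hcon⟩
    clear_value N
    obtain ⟨hNb, hNne⟩ := hPN
    have htgtN : B.tgt (f.1 ⟨N, hNb⟩) = B.tgt (g.1 ⟨N, hNb⟩) := by
      rcases eq_or_lt_of_le (show N ≤ b - 1 by omega) with h | h
      · -- N is the last index; use equality of targets of the composite edges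
        subst h
        exact B.castV_inj _ htgt
      · have h2 : f.1 ⟨N + 1, by omega⟩ = g.1 ⟨N + 1, by omega⟩ :=
          hafter (N + 1) (by omega) (by omega)
        rw [f.2 N (by omega), g.2 N (by omega), h2]
    rcases B.elt_total _ _ _ htgtN hNne with h | h
    · exact Or.inl ⟨N, hNb, h, hafter⟩
    · exact Or.inr ⟨N, hNb, h, fun i hi hN => (hafter i hi hN).symm⟩

def teleMap (ns : ℕ → ℕ) (hmono : StrictMono ns) (h0 : ns 0 = 0) (x : B.PathSpace) :
    (B.Telescope ns hmono h0).PathSpace :=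
  ⟨fun l => ⟨fun i => x.1 (ns l + i.val), fun i _ => x.2 (ns l + i)⟩, fun l => by
    have hab : ns l < ns (l + 1) := hmono (Nat.lt_succ_self l)
    have hm : ns l + (ns (l + 1) - ns l - 1) + 1 = ns (l + 1) := by omega
    show B.castV _ (B.tgt (x.1 (ns l + (ns (l + 1) - ns l - 1)))) = B.src (x.1 (ns (l + 1) + 0))
    rw [x.2 (ns l + (ns (l + 1) - ns l - 1))]
    exact B.castV_eq_of_heq _ (by rw [hm]; exact HEq.rfl)⟩


/-- Level `n+1` is uniformly ordered: there is a single nonempty block `P` of paths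
from the root to level `n` such that the `n`-basic block at every vertex at level
`n+1` is a positive power of `P`. -/
def UniformlyOrderedLevel (n : ℕ) : Prop :=
  ∃ (p : ℕ) (hp : 0 < p) (P : Fin p → B.FinPath n),
    ∀ v : B.V (n + 1), ∃ (m : ℕ), 0 < m ∧
      ∃ enum : Fin (m * p) ≃ { q : B.FinPath (n + 1) // B.EndsAt q v },
        (∀ i j : Fin (m * p), i < j ↔ B.finLT (enum i).1 (enum j).1) ∧
        (∀ i : Fin (m * p),
          B.truncTo n (Nat.le_succ n) (enum i).1 = P ⟨i.val % p, Nat.mod_lt _ hp⟩)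

/-- The ordinal label of an edge: its position in the linear order on the edges
into its target. -/
noncomputable def edgeLabel {n : ℕ} (e : B.E n) : ℕ := Nat.card { e' : B.E n // B.elt e' e }

/-- Deterministic: for every `n ≥ 1`, distinct edges with the same source at level
`n` have different ordinal labels. -/
def Deterministic : Prop :=
  ∀ n : ℕ, 1 ≤ n → ∀ e f : B.E n, B.src e = B.src f → e ≠ f →
    B.edgeLabel e ≠ B.edgeLabel f

end BDiagram

/-- A Bratteli–Vershik system: a simple, properly ordered ordered Bratteli diagram
together with its Vershik map. -/
structure BVSystem where
  B : BDiagram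
  T : B.PathSpace ≃ B.PathSpace
  proper : B.ProperlyOrdered
  simple : B.Simple
  vershik : B.IsVershik T

/-- Conjugacy of systems: an equivariant homeomorphism of the path spaces taking
minimal paths to minimal paths. -/
def Conjugate (S S' : BVSystem) : Prop :=
  ∃ φ : S.B.PathSpace ≃ S'.B.PathSpace,
    (@Continuous _ _ S.B.pathTop S'.B.pathTop φ) ∧
    (@Continuous _ _ S'.B.pathTop S.B.pathTop φ.symm) ∧
    (∀ x, φ (S.T x) = S'.T (φ x)) ∧
    (∀ x, S.B.IsMinPath x → S'.B.IsMinPath (φ x))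

/-- An odometer: a system whose diagram has exactly one vertex at every level. -/
def IsOdometer (S : BVSystem) : Prop := ∀ n, Subsingleton (S.B.V n)

/-!
Say that a system is timed between levels `k` and `l` if, for every `j`, some pair of paths with the
same `k`-coding but different `l`-codings has a `j` cut. If a system is timed between `k` and `m`,
then for any `l` it is timed between `k` and `l` or between `l` and `m`, so being weakly well timed
means being timed between each level and some higher one. A conjugacy only shifts levels, by
compactness of the path space, so weak well-timedness is a conjugacy invariant; well timed systems
have it and untimed ones do not. Conversely, after telescoping along levels `n 0 < n 1 < ⋯`, a
system is timed between `k` and `l` precisely when the original is timed between `n k` and `n l`. A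
weakly well timed system therefore becomes well timed if each `n (k + 1)` is chosen large enough
after `n k`, and a system not timed between `K` and any other level becomes untimed once `n 1 ≥ K`.
-/

section Blocks

variable {ns : ℕ → ℕ}

theorem exists_mem_Ico_succ (hmono : StrictMono ns) (h0 : ns 0 = 0) (n : ℕ) :
    ∃ l, n ∈ Set.Ico (ns l) (ns (l + 1)) := by
  have hcover := iUnion_Ico_map_succ_eq_Ici (f := ns) (fun _ => hmono.monotone bot_le)
    hmono.not_bddAbove_range_of_wellFoundedLT
  refine Set.mem_iUnion.1 (hcover.symm ▸ ?_)
  exact h0.trans_le n.zero_le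

theorem lt_apply_iff_of_mem_Ico_succ (hmono : StrictMono ns) {k l n : ℕ}
    (hn : n ∈ Set.Ico (ns l) (ns (l + 1))) : n < ns k ↔ l < k :=
  ⟨fun h => hmono.lt_iff_lt.1 (hn.1.trans_lt h), fun h => hn.2.trans_le (hmono.monotone h)⟩

theorem forall_block_iff (hmono : StrictMono ns) (h0 : ns 0 = 0) {P : ℕ → Prop} :
    (∀ l, ∀ n ∈ Set.Ico (ns l) (ns (l + 1)), P n) ↔ ∀ n, P n :=
  ⟨fun h n => let ⟨l, hn⟩ := exists_mem_Ico_succ hmono h0 n; h l n hn, fun h _ n _ => h n⟩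

theorem forall_block_lt_iff (hmono : StrictMono ns) (h0 : ns 0 = 0) {P : ℕ → Prop} {k : ℕ} :
    (∀ l < k, ∀ n ∈ Set.Ico (ns l) (ns (l + 1)), P n) ↔ ∀ n < ns k, P n := by
  refine Iff.trans (forall_congr' fun l => ?_) (forall_block_iff hmono h0)
  refine ⟨fun h n hn hnk => ?_, fun h hlk n hn => ?_⟩
  · exact h ((lt_apply_iff_of_mem_Ico_succ hmono hn).1 hnk) n hn
  · exact h n hn ((lt_apply_iff_of_mem_Ico_succ hmono hn).2 hlk)

/-- The natural numbers cut into the blocks `[ns l, ns (l + 1))`: the pair `(l, i)` stands for the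
number `ns l + i`. -/
noncomputable def blockEquiv (hmono : StrictMono ns) (h0 : ns 0 = 0) :
    (Σ l, Fin (ns (l + 1) - ns l)) ≃ ℕ :=
  Equiv.ofBijective (fun p => ns p.1 + p.2) <| by
    refine ⟨?_, fun n => ?_⟩
    · rintro ⟨l, i⟩ ⟨l', i'⟩ (h : ns l + i = ns l' + i')
      have hl : ns l + i ∈ Set.Ico (ns l) (ns (l + 1)) := ⟨by omega, by omega⟩
      have hl' : ns l + i ∈ Set.Ico (ns l') (ns (l' + 1)) := ⟨by omega, by omega⟩
      obtain rfl : l = l' := le_antisymm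
        (Nat.lt_succ_iff.1 <| (lt_apply_iff_of_mem_Ico_succ hmono hl).1 hl'.2)
        (Nat.lt_succ_iff.1 <| (lt_apply_iff_of_mem_Ico_succ hmono hl').1 hl.2)
      obtain rfl : i = i' := Fin.ext (Nat.add_left_cancel h)
      rfl
    · obtain ⟨l, hl, hn⟩ := exists_mem_Ico_succ hmono h0 n
      exact ⟨⟨l, n - ns l, by omega⟩, Nat.add_sub_cancel' hl⟩

end Blocks

theorem isClopen_setOf_forall_lt {X : Type*} [TopologicalSpace X] {P : ℕ → X → Prop}
    (h : ∀ i, IsClopen {x | P i x}) (k : ℕ) : IsClopen {x | ∀ i < k, P i x} := by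
  have : {x | ∀ i < k, P i x} = ⋂ i ∈ Finset.range k, {x | P i x} := by
    ext
    simp only [Finset.mem_range, Set.mem_iInter, Set.mem_ofPred_eq]
  exact this ▸ isClopen_biInter_finset fun i _ => h i

namespace BDiagram

variable {B B' : BDiagram}

/-- Two paths have the same initial segment from the root to level `k`. -/
def AgreeBelow (k : ℕ) (x y : B.PathSpace) : Prop := ∀ i < k, x.1 i = y.1 i

/-- The initial segment of the path from the root to level `k` consists of minimal edges. -/
def MinBelow (k : ℕ) (x : B.PathSpace) : Prop := ∀ i < k, B.IsMinEdge (x.1 i)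

theorem eq_of_forall_agreeBelow {x y : B.PathSpace} (h : ∀ k, AgreeBelow k x y) : x = y :=
  Subtype.ext <| funext fun i => h (i + 1) i i.lt_succ_self

theorem isMinPath_iff_forall_minBelow {x : B.PathSpace} :
    B.IsMinPath x ↔ ∀ k, MinBelow k x :=
  ⟨fun h _ i _ => h i, fun h i => h (i + 1) i i.lt_succ_self⟩

local instance : TopologicalSpace B.PathSpace := B.pathTop

section Topology

attribute [local instance] fintE

local instance (n : ℕ) : TopologicalSpace (B.E n) := ⊥

local instance (n : ℕ) : DiscreteTopology (B.E n) := ⟨rfl⟩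

theorem continuous_edge (i : ℕ) : Continuous fun x : B.PathSpace => x.1 i :=
  (continuous_apply i).comp continuous_induced_dom

theorem compactSpace_pathSpace : CompactSpace B.PathSpace := by
  have hclosed : IsClosed {x : ∀ n, B.E n | ∀ n, B.tgt (x n) = B.src (x (n + 1))} := by
    rw [Set.ofPred_forall]
    refine isClosed_iInter fun n => ?_
    have hcont : Continuous fun x : ∀ n, B.E n => (x n, x (n + 1)) := by fun_prop
    exact (isClosed_discrete {e : B.E n × B.E (n + 1) | B.tgt e.1 = B.src e.2}).preimage hcont
  exact isCompact_iff_compactSpace.1 hclosed.isCompact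

theorem isClopen_setOf_agreeBelow (k : ℕ) :
    IsClopen {p : B.PathSpace × B.PathSpace | AgreeBelow k p.1 p.2} :=
  isClopen_setOf_forall_lt (fun i => (isClopen_discrete {e : B.E i × B.E i | e.1 = e.2}).preimage
    (((continuous_edge i).comp continuous_fst).prodMk ((continuous_edge i).comp continuous_snd))) k

theorem isClopen_setOf_minBelow (k : ℕ) : IsClopen {x : B.PathSpace | MinBelow k x} :=
  isClopen_setOf_forall_lt
    (fun i => (isClopen_discrete {e | B.IsMinEdge e}).preimage (continuous_edge i)) k

theorem continuous_iff_forall_exists_agreeBelow {f : B.PathSpace → B'.PathSpace} :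
    Continuous f ↔ ∀ k', ∃ k, ∀ x y, AgreeBelow k x y → AgreeBelow k' (f x) (f y) := by
  refine ⟨fun hf k' => ?_, fun hf => ?_⟩
  · have := compactSpace_pathSpace (B := B)
    obtain ⟨k, hk⟩ := exists_subset_nhds_of_compactSpace
      (V := fun k => {p : B.PathSpace × B.PathSpace | AgreeBelow k p.1 p.2})
      (U := {p | AgreeBelow k' (f p.1) (f p.2)})
      (directed_of_isDirected_le fun _ _ hab _ hp i hi => hp i (hi.trans_le hab))
      (fun k => (isClopen_setOf_agreeBelow k).isClosed) fun p hp => by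
        have hdiag : p.1 = p.2 := eq_of_forall_agreeBelow (Set.mem_iInter.1 hp)
        refine ((isClopen_setOf_agreeBelow k').isOpen.preimage (hf.prodMap hf)).mem_nhds ?_
        exact fun i _ => congrArg (fun x => (f x).1 i) hdiag
    exact ⟨k, fun x y h => hk (a := (x, y)) h⟩
  · refine continuous_induced_rng.2 <| continuous_pi fun i => ?_
    refine continuous_iff_continuousAt.2 fun x => ?_
    obtain ⟨k, hk⟩ := hf (i + 1)
    have hnhds : {y | AgreeBelow k x y} ∈ nhds x :=
      ((isClopen_setOf_agreeBelow k).isOpen.preimage (Continuous.prodMk_right x)).mem_nhds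
        fun _ _ => rfl
    refine continuousAt_const.congr (?_ : (fun _ => (f x).1 i) =ᶠ[nhds x] fun y => (f y).1 i)
    filter_upwards [hnhds] with y hy using hk x y hy i i.lt_succ_self

theorem exists_minBelow_map {f : B.PathSpace → B'.PathSpace} (hf : Continuous f)
    (hmin : ∀ x, B.IsMinPath x → B'.IsMinPath (f x)) (k' : ℕ) :
    ∃ k, ∀ x, MinBelow k x → MinBelow k' (f x) := by
  have := compactSpace_pathSpace (B := B)
  refine exists_subset_nhds_of_compactSpace
    (V := fun k => {x : B.PathSpace | MinBelow k x}) (U := {x | MinBelow k' (f x)})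
    (directed_of_isDirected_le fun _ _ hab _ hx i hi => hx i (hi.trans_le hab))
    (fun k => (isClopen_setOf_minBelow k).isClosed) fun x hx => ?_
  have hx' := hmin x (isMinPath_iff_forall_minBelow.2 (Set.mem_iInter.1 hx))
  exact ((isClopen_setOf_minBelow k').isOpen.preimage hf).mem_nhds
    (isMinPath_iff_forall_minBelow.1 hx' k')

end Topology

section Timing

variable {T : B.PathSpace ≃ B.PathSpace} {T' : B'.PathSpace ≃ B'.PathSpace} {x y : B.PathSpace}
  {j k l m : ℕ}

theorem sameCoding_iff_forall_agreeBelow :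
    B.SameCoding T k x y ↔ ∀ m, AgreeBelow k (B.iterZ T m x) (B.iterZ T m y) := Iff.rfl

theorem hasCut_iff_exists_minBelow :
    B.HasCut T j x y ↔ ∃ m, MinBelow j (B.iterZ T m x) ∧ MinBelow j (B.iterZ T m y) := Iff.rfl

theorem SameCoding.mono (h : B.SameCoding T l x y) (hkl : k ≤ l) : B.SameCoding T k x y :=
  fun n i hi => h n i (hi.trans_le hkl)

theorem HasCut.mono (h : B.HasCut T l x y) (hkl : k ≤ l) : B.HasCut T k x y :=
  h.imp fun _ hn => hn.imp (fun hx i hi => hx i (hi.trans_le hkl))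
    fun hy i hi => hy i (hi.trans_le hkl)

theorem depthPair_iff :
    B.DepthPair T k x y ↔ B.SameCoding T k x y ∧ ¬ B.SameCoding T (k + 1) x y :=
  and_iff_right_of_imp fun h hxy => h.2 (hxy ▸ fun _ _ _ => rfl)

/-- For every `j` some pair of paths with the same `k`-coding but different `l`-codings has a
`j` cut. Unlike well-timedness, this relates two arbitrary levels, so it can be followed through
maps that shift levels. -/
def TimedBetween (T : B.PathSpace ≃ B.PathSpace) (k l : ℕ) : Prop :=
  ∀ j, ∃ x y, B.SameCoding T k x y ∧ ¬ B.SameCoding T l x y ∧ B.HasCut T j x y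

theorem TimedBetween.mono {k' l' : ℕ} (h : TimedBetween T k l) (hk : k' ≤ k) (hl : l ≤ l') :
    TimedBetween T k' l' := fun j =>
  let ⟨x, y, hsame, hdiff, hcut⟩ := h j
  ⟨x, y, hsame.mono hk, fun h' => hdiff (h'.mono hl), hcut⟩

theorem not_timedBetween_self : ¬ TimedBetween T k k := fun h =>
  let ⟨_, _, hsame, hdiff, _⟩ := h 0
  hdiff hsame

theorem TimedBetween.split (h : TimedBetween T k m) (l : ℕ) :
    TimedBetween T k l ∨ TimedBetween T l m := by
  by_contra! hcon
  simp only [TimedBetween, not_forall] at hcon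
  obtain ⟨⟨j₁, hj₁⟩, j₂, hj₂⟩ := hcon
  obtain ⟨x, y, hsame, hdiff, hcut⟩ := h (max j₁ j₂)
  by_cases hl : B.SameCoding T l x y
  · exact hj₂ ⟨x, y, hl, hdiff, hcut.mono (le_max_right _ _)⟩
  · exact hj₁ ⟨x, y, hsame, hl, hcut.mono (le_max_left _ _)⟩

theorem TimedBetween.exists_succ (h : TimedBetween T k l) :
    ∃ d, k ≤ d ∧ TimedBetween T d (d + 1) := by
  induction l with
  | zero => exact absurd (h.mono k.zero_le le_rfl) not_timedBetween_self
  | succ l ih =>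
    rcases h.split l with hkl | hl
    · exact ih hkl
    · rcases le_or_gt k l with hle | hlt
      · exact ⟨l, hle, hl⟩
      · exact absurd (h.mono hlt le_rfl) not_timedBetween_self

theorem timedBetween_succ_iff :
    TimedBetween T k (k + 1) ↔ ∀ j, k < j → ∃ x y, B.DepthPair T k x y ∧ B.HasCut T j x y := by
  simp only [depthPair_iff, and_assoc]
  refine ⟨fun h j _ => h j, fun h j => ?_⟩
  obtain ⟨x, y, hsame, hdiff, hcut⟩ := h (max j (k + 1)) (by omega)
  exact ⟨x, y, hsame, hdiff, hcut.mono (le_max_left _ _)⟩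

theorem wellTimed_iff : B.WellTimed T ↔ ∀ k, 1 ≤ k → TimedBetween T k (k + 1) :=
  forall₂_congr fun _ _ => timedBetween_succ_iff.symm

theorem untimed_iff : B.Untimed T ↔ ∀ k, 1 ≤ k → ¬ TimedBetween T k (k + 1) := by
  simp only [timedBetween_succ_iff, Untimed, not_forall, not_exists, not_and, exists_prop]

theorem weaklyWellTimed_iff : B.WeaklyWellTimed T ↔ ∀ k, ∃ l, TimedBetween T k l := by
  simp only [WeaklyWellTimed, ← timedBetween_succ_iff]
  refine ⟨fun h k => ?_, fun h k => ?_⟩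
  · obtain ⟨d, hkd, -, hd⟩ := h k
    exact ⟨d + 1, hd.mono hkd le_rfl⟩
  · obtain ⟨l, hl⟩ := h (k + 1)
    obtain ⟨d, hkd, hd⟩ := hl.exists_succ
    exact ⟨d, by omega, by omega, hd⟩

theorem WellTimed.weaklyWellTimed (h : B.WellTimed T) : B.WeaklyWellTimed T :=
  weaklyWellTimed_iff.2 fun k =>
    ⟨k + 2, (wellTimed_iff.1 h (k + 1) (by omega)).mono k.le_succ le_rfl⟩

theorem Untimed.not_weaklyWellTimed (h : B.Untimed T) : ¬ B.WeaklyWellTimed T := fun hw => by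
  obtain ⟨l, hl⟩ := weaklyWellTimed_iff.1 hw 1
  obtain ⟨d, h1d, hd⟩ := hl.exists_succ
  exact untimed_iff.1 h d h1d hd

end Timing

section Semiconj

variable {T : B.PathSpace ≃ B.PathSpace} {T' : B'.PathSpace ≃ B'.PathSpace}

theorem semiconj_iterZ {f : B.PathSpace → B'.PathSpace} (h : Function.Semiconj f T T') (m : ℤ) :
    Function.Semiconj f (B.iterZ T m) (B'.iterZ T' m) := by
  have hpow (n : ℕ) : Function.Semiconj f (B.iterZ T n) (B'.iterZ T' n) := by
    simp only [iterZ, zpow_natCast, ← Equiv.Perm.iterate_eq_pow]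
    exact h.iterate_right n
  obtain ⟨n, rfl | rfl⟩ := m.eq_nat_or_neg
  · exact hpow n
  · simp only [iterZ, zpow_neg]
    exact (hpow n).inverses_right (Equiv.right_inv _) (Equiv.left_inv _)

theorem exists_sameCoding_map {f : B.PathSpace → B'.PathSpace} (hf : Continuous f)
    (h : Function.Semiconj f T T') (k' : ℕ) :
    ∃ k, ∀ x y, B.SameCoding T k x y → B'.SameCoding T' k' (f x) (f y) := by
  obtain ⟨k, hk⟩ := continuous_iff_forall_exists_agreeBelow.1 hf k'
  refine ⟨k, fun x y hxy => sameCoding_iff_forall_agreeBelow.2 fun m => ?_⟩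
  rw [← semiconj_iterZ h m x, ← semiconj_iterZ h m y]
  exact hk _ _ (hxy m)

theorem exists_hasCut_map {f : B.PathSpace → B'.PathSpace} (hf : Continuous f)
    (h : Function.Semiconj f T T') (hmin : ∀ x, B.IsMinPath x → B'.IsMinPath (f x)) (j' : ℕ) :
    ∃ j, ∀ x y, B.HasCut T j x y → B'.HasCut T' j' (f x) (f y) := by
  obtain ⟨j, hj⟩ := exists_minBelow_map hf hmin j'
  refine ⟨j, fun x y ⟨m, hx, hy⟩ => hasCut_iff_exists_minBelow.2 ⟨m, ?_⟩⟩
  rw [← semiconj_iterZ h m x, ← semiconj_iterZ h m y]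
  exact ⟨hj _ hx, hj _ hy⟩

theorem exists_timedBetween_map {φ : B.PathSpace ≃ B'.PathSpace} (hφ : Continuous φ)
    (hφsymm : Continuous φ.symm) (h : Function.Semiconj φ T T')
    (hmin : ∀ x, B.IsMinPath x → B'.IsMinPath (φ x)) (k' : ℕ) :
    ∃ k, ∀ l, TimedBetween T k l → ∃ l', TimedBetween T' k' l' := by
  obtain ⟨k, hk⟩ := exists_sameCoding_map hφ h k'
  refine ⟨k, fun l hkl => ?_⟩
  have hsymm : Function.Semiconj φ.symm T' T := h.inverse_left φ.left_inv φ.right_inv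
  obtain ⟨l', hl'⟩ := exists_sameCoding_map hφsymm hsymm l
  refine ⟨l', fun j' => ?_⟩
  obtain ⟨j, hj⟩ := exists_hasCut_map hφ h hmin j'
  obtain ⟨x, y, hsame, hdiff, hcut⟩ := hkl j
  exact ⟨φ x, φ y, hk x y hsame, fun h' => hdiff (by simpa using hl' _ _ h'), hj x y hcut⟩

end Semiconj

section Chains

theorem nonempty_edge (B : BDiagram) (n : ℕ) : Nonempty (B.E n) :=
  let ⟨v⟩ := B.nonV n
  let ⟨e, _⟩ := B.hasOut n v
  ⟨e⟩

theorem SegOn.update {f : ∀ i, B.E i} {a c : ℕ} {e : B.E (c + 1)} (hf : B.SegOn f a (c + 1))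
    (he : B.tgt (f c) = B.src e) : B.SegOn (Function.update f (c + 1) e) a (c + 1 + 1) := by
  intro i hai hi
  rw [Function.update_of_ne (by omega)]
  rcases (show i ≤ c by omega).eq_or_lt with rfl | hic
  · rw [Function.update_self, he]
  · rw [Function.update_of_ne (by omega)]
    exact hf i hai (by omega)

theorem exists_segOn_ending {n : ℕ} (e : B.E n) :
    ∃ f : ∀ i, B.E i, B.SegOn f 0 (n + 1) ∧ f n = e := by
  induction n with
  | zero =>
    have := B.nonempty_edge
    exact ⟨Function.update (fun i => Classical.arbitrary (B.E i)) 0 e,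
      fun i _ hi => by omega, Function.update_self ..⟩
  | succ n ih =>
    obtain ⟨e', he'⟩ := B.hasIn n (B.src e)
    obtain ⟨f, hf, rfl⟩ := ih e'
    exact ⟨Function.update f (n + 1) e, hf.update he', Function.update_self ..⟩

theorem exists_path_replacing_edge (x : B.PathSpace) {n : ℕ} {e : B.E n}
    (he : B.tgt e = B.tgt (x.1 n)) :
    ∃ z : B.PathSpace, z.1 n = e ∧ ∀ i, n < i → z.1 i = x.1 i := by
  obtain ⟨f, hf, rfl⟩ := exists_segOn_ending e
  let z (i : ℕ) : B.E i := if i ≤ n then f i else x.1 i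
  have hz_le {i : ℕ} (hi : i ≤ n) : z i = f i := if_pos hi
  have hz_gt {i : ℕ} (hi : n < i) : z i = x.1 i := if_neg hi.not_ge
  refine ⟨⟨z, fun i => ?_⟩, hz_le le_rfl, fun i => hz_gt⟩
  rcases lt_trichotomy i n with hin | rfl | hni
  · rw [hz_le hin.le, hz_le hin]
    exact hf i i.zero_le (by omega)
  · rw [hz_le le_rfl, hz_gt i.lt_succ_self, he]
    exact x.2 i
  · rw [hz_gt hni, hz_gt (by omega)]
    exact x.2 i

/-- Every vertex at level `a` is connected to every vertex at level `c + 1`. The upper level is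
written `c + 1` so that the last edge of a connecting chain is the one at level `c`. -/
def FullyConnected (B : BDiagram) (a c : ℕ) : Prop :=
  ∀ (v : B.V a) (w : B.V (c + 1)),
    ∃ f : ∀ i, B.E i, B.SegOn f a (c + 1) ∧ B.src (f a) = v ∧ B.tgt (f c) = w

theorem FullyConnected.mono {a c d : ℕ} (h : B.FullyConnected a c) (hac : a ≤ c) (hcd : c ≤ d) :
    B.FullyConnected a d := by
  induction d, hcd using Nat.le_induction with
  | base => exact h
  | succ d hcd ih =>
    intro v w
    obtain ⟨e, rfl⟩ := B.hasIn (d + 1) w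
    obtain ⟨f, hf, hv, hw⟩ := ih v (B.src e)
    refine ⟨Function.update f (d + 1) e, hf.update hw, ?_, by rw [Function.update_self]⟩
    rwa [Function.update_of_ne (by omega)]

theorem simple_of_forall_exists_edge
    (h : ∀ (n : ℕ) (v : B.V n) (w : B.V (n + 1)), ∃ e : B.E n, B.src e = v ∧ B.tgt e = w) :
    B.Simple := by
  refine ⟨id, strictMono_id, rfl, fun l c hc v w => ?_⟩
  obtain rfl : l = c := Nat.succ.inj hc
  obtain ⟨e, hv, hw⟩ := h l v w
  have := B.nonempty_edge
  refine ⟨Function.update (fun i => Classical.arbitrary (B.E i)) l e, fun i hi hi' => ?_, ?_, ?_⟩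
  · exact absurd hi' (Nat.succ_lt_succ_iff.not.2 hi.not_gt)
  · exact (congrArg B.src (Function.update_self ..)).trans hv
  · exact (congrArg B.tgt (Function.update_self ..)).trans hw

theorem Simple.exists_levels (h : B.Simple) (G : ℕ → ℕ) :
    ∃ ns : ℕ → ℕ, StrictMono ns ∧ ns 0 = 0 ∧ (∀ l, G (ns l) ≤ ns (l + 1)) ∧
      ∀ l c, ns (l + 1) = c + 1 → B.FullyConnected (ns l) c := by
  obtain ⟨s, hs, hs0, hconn⟩ := h
  let step (a : ℕ) : ℕ := a + 1 + G (s a)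
  let t (l : ℕ) : ℕ := step^[l] 0
  have ht_succ (l : ℕ) : t (l + 1) = t l + 1 + G (s (t l)) := Function.iterate_succ_apply' ..
  have ht : StrictMono t := strictMono_nat_of_lt_succ fun l => by rw [ht_succ]; omega
  refine ⟨s ∘ t, hs.comp ht, hs0, fun l => ?_, fun l c hc => ?_⟩
  · calc G (s (t l)) ≤ t (l + 1) := by rw [ht_succ]; omega
      _ ≤ s (t (l + 1)) := hs.le_apply
  · have hlt : s (t l) < s (t l + 1) := hs (t l).lt_succ_self
    have hle : s (t l + 1) ≤ c + 1 := hc ▸ hs.monotone (ht l.lt_succ_self)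
    obtain ⟨d, hd⟩ := Nat.exists_eq_succ_of_ne_zero hlt.ne_bot
    have hfull : B.FullyConnected (s (t l)) d := hconn _ _ hd
    exact hfull.mono (by omega) (by omega)

end Chains

section Telescope

variable {ns : ℕ → ℕ} (hmono : StrictMono ns) (h0 : ns 0 = 0)

theorem castV_apply {m n : ℕ} (h : m = n) (v : ∀ i, B.V i) : B.castV h (v m) = v n := by
  subst h
  rfl

theorem teleMap_apply_eq_iff {x y : B.PathSpace} {l : ℕ} :
    (B.teleMap ns hmono h0 x).1 l = (B.teleMap ns hmono h0 y).1 l ↔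
      ∀ n ∈ Set.Ico (ns l) (ns (l + 1)), x.1 n = y.1 n := by
  refine Subtype.ext_iff.trans <| funext_iff.trans ⟨fun h n ⟨hn, hn'⟩ => ?_, fun h i => ?_⟩
  · obtain ⟨i, rfl⟩ := Nat.exists_eq_add_of_le hn
    exact h ⟨i, by omega⟩
  · exact h (ns l + i) ⟨by omega, by omega⟩

theorem teleMap_injective : Function.Injective (B.teleMap ns hmono h0) := by
  refine fun x y hxy => Subtype.ext <| funext fun n => ?_
  obtain ⟨l, hn⟩ := exists_mem_Ico_succ hmono h0 n
  exact (teleMap_apply_eq_iff hmono h0).1 (by rw [hxy]) n hn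

theorem teleMap_surjective : Function.Surjective (B.teleMap ns hmono h0) := by
  rintro ⟨y, hy⟩
  change ∀ l, B.TelE (ns l) (ns (l + 1)) at y
  let x : ∀ n, B.E n :=
    Equiv.piCongrLeft B.E (blockEquiv hmono h0) fun p => (y p.1).1 p.2
  have hx (l : ℕ) (i : Fin (ns (l + 1) - ns l)) : x (ns l + i) = (y l).1 i :=
    Equiv.piCongrLeft_apply_apply B.E (blockEquiv hmono h0) _ ⟨l, i⟩
  refine ⟨⟨x, fun n => ?_⟩, Subtype.ext <| funext fun l => Subtype.ext <| funext (hx l)⟩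
  obtain ⟨⟨l, i, hi⟩, rfl : ns l + i = n⟩ := (blockEquiv hmono h0).surjective n
  by_cases hi' : i + 1 < ns (l + 1) - ns l
  · calc B.tgt (x (ns l + i)) = B.tgt ((y l).1 ⟨i, hi⟩) := congrArg B.tgt (hx l ⟨i, hi⟩)
      _ = B.src ((y l).1 ⟨i + 1, hi'⟩) := (y l).2 i hi'
      _ = B.src (x (ns l + i + 1)) := (congrArg B.src (hx l ⟨i + 1, hi'⟩)).symm
  · obtain rfl : i = ns (l + 1) - ns l - 1 := by omega
    have hend : ns l + (ns (l + 1) - ns l - 1) + 1 = ns (l + 1) := by omega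
    have hpos : 0 < ns (l + 1 + 1) - ns (l + 1) := Nat.sub_pos_of_lt (hmono (Nat.lt_succ_self _))
    refine B.castV_inj hend ?_
    calc B.castV hend (B.tgt (x (ns l + (ns (l + 1) - ns l - 1))))
        = B.castV hend (B.tgt ((y l).1 ⟨_, hi⟩)) := by rw [← hx l ⟨_, hi⟩]
      _ = B.src ((y (l + 1)).1 ⟨0, hpos⟩) := hy l
      _ = B.src (x (ns (l + 1))) := (congrArg B.src (hx (l + 1) ⟨0, hpos⟩)).symm
      _ = B.castV hend (B.src (x _)) := (castV_apply hend fun n => B.src (x n)).symm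

/-- The bijection from the paths of a diagram to the paths of its telescoping. -/
noncomputable def teleEquiv : B.PathSpace ≃ (B.Telescope ns hmono h0).PathSpace :=
  Equiv.ofBijective (B.teleMap ns hmono h0)
    ⟨teleMap_injective hmono h0, teleMap_surjective hmono h0⟩

variable {hmono h0} {x y : B.PathSpace}

local notation "Φ" => teleEquiv hmono h0

theorem teleEquiv_apply_eq_iff {l : ℕ} :
    (Φ x).1 l = (Φ y).1 l ↔ ∀ n ∈ Set.Ico (ns l) (ns (l + 1)), x.1 n = y.1 n :=
  teleMap_apply_eq_iff hmono h0

theorem elt_teleEquiv_iff {l : ℕ} :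
    (B.Telescope ns hmono h0).elt ((Φ x).1 l) ((Φ y).1 l) ↔
      ∃ n ∈ Set.Ico (ns l) (ns (l + 1)), B.elt (x.1 n) (y.1 n) ∧
        ∀ i, n < i → i < ns (l + 1) → x.1 i = y.1 i := by
  constructor
  · rintro ⟨n, hn, hlt, hagree⟩
    refine ⟨ns l + n, ⟨by omega, by omega⟩, hlt, fun i hni hi => ?_⟩
    obtain ⟨i, rfl⟩ := Nat.exists_eq_add_of_le (show ns l ≤ i by omega)
    exact hagree i (by omega) (by omega)
  · rintro ⟨n, ⟨hn, hn'⟩, hlt, hagree⟩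
    obtain ⟨n, rfl⟩ := Nat.exists_eq_add_of_le hn
    refine ⟨n, by omega, hlt, fun i hi hni => ?_⟩
    exact hagree _ (Nat.add_lt_add_left hni _) (by dsimp only; omega)

theorem pathLT_teleEquiv_iff :
    (B.Telescope ns hmono h0).pathLT (Φ x) (Φ y) ↔ B.pathLT x y := by
  simp only [pathLT, elt_teleEquiv_iff, teleEquiv_apply_eq_iff]
  constructor
  · rintro ⟨l, ⟨n, -, hlt, hblock⟩, hlater⟩
    refine ⟨n, hlt, fun i hni => ?_⟩
    obtain ⟨l', hi⟩ := exists_mem_Ico_succ hmono h0 i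
    rcases lt_or_ge i (ns (l + 1)) with hlt_end | hend_le
    · exact hblock i hni hlt_end
    · exact hlater l' (Nat.succ_lt_succ_iff.1 <| hmono.lt_iff_lt.1 <| hend_le.trans_lt hi.2) i hi
  · rintro ⟨n, hlt, hagree⟩
    obtain ⟨l, hn⟩ := exists_mem_Ico_succ hmono h0 n
    refine ⟨l, ⟨n, hn, hlt, fun i hni _ => hagree i hni⟩, fun l' hl' i hi => hagree i ?_⟩
    exact hn.2.trans_le ((hmono.monotone hl').trans hi.1)

theorem isMinEdge_teleEquiv_iff {l : ℕ} :
    (B.Telescope ns hmono h0).IsMinEdge ((Φ x).1 l) ↔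
      ∀ n ∈ Set.Ico (ns l) (ns (l + 1)), B.IsMinEdge (x.1 n) := by
  refine ⟨fun h n hn e he => ?_, fun h e ⟨i, hi, hlt, _⟩ => h (ns l + i) (by grind) _ hlt⟩
  obtain ⟨z, rfl, hz⟩ := exists_path_replacing_edge x (B.elt_tgt _ _ _ he)
  exact h ((Φ z).1 l) (elt_teleEquiv_iff.2 ⟨n, hn, he, fun i hni _ => hz i hni⟩)

theorem isMaxEdge_teleEquiv_iff {l : ℕ} :
    (B.Telescope ns hmono h0).IsMaxEdge ((Φ x).1 l) ↔
      ∀ n ∈ Set.Ico (ns l) (ns (l + 1)), B.IsMaxEdge (x.1 n) := by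
  refine ⟨fun h n hn e he => ?_, fun h e ⟨i, hi, hlt, _⟩ => h (ns l + i) (by grind) _ hlt⟩
  obtain ⟨z, rfl, hz⟩ := exists_path_replacing_edge x (B.elt_tgt _ _ _ he).symm
  exact h ((Φ z).1 l) (elt_teleEquiv_iff.2 ⟨n, hn, he, fun i hni _ => (hz i hni).symm⟩)

theorem agreeBelow_teleEquiv_iff {k : ℕ} : AgreeBelow k (Φ x) (Φ y) ↔ AgreeBelow (ns k) x y := by
  simp only [AgreeBelow, teleEquiv_apply_eq_iff]
  exact forall_block_lt_iff hmono h0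

theorem minBelow_teleEquiv_iff {k : ℕ} : MinBelow k (Φ x) ↔ MinBelow (ns k) x := by
  simp only [MinBelow, isMinEdge_teleEquiv_iff]
  exact forall_block_lt_iff hmono h0

theorem isMinPath_teleEquiv_iff :
    (B.Telescope ns hmono h0).IsMinPath (Φ x) ↔ B.IsMinPath x := by
  simp only [IsMinPath, isMinEdge_teleEquiv_iff]
  exact forall_block_iff hmono h0

theorem isMaxPath_teleEquiv_iff :
    (B.Telescope ns hmono h0).IsMaxPath (Φ x) ↔ B.IsMaxPath x := by
  simp only [IsMaxPath, isMaxEdge_teleEquiv_iff]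
  exact forall_block_iff hmono h0

theorem continuous_teleEquiv : Continuous (teleEquiv (B := B) hmono h0) :=
  continuous_iff_forall_exists_agreeBelow.2 fun k =>
    ⟨ns k, fun _ _ => agreeBelow_teleEquiv_iff.2⟩

theorem continuous_teleEquiv_symm : Continuous (teleEquiv (B := B) hmono h0).symm := by
  refine continuous_iff_forall_exists_agreeBelow.2 fun k => ⟨k, fun x y hxy i hi => ?_⟩
  rw [← Equiv.apply_symm_apply Φ x, ← Equiv.apply_symm_apply Φ y, agreeBelow_teleEquiv_iff] at hxy
  exact hxy i (hi.trans_le hmono.le_apply)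

theorem ProperlyOrdered.telescope (h : B.ProperlyOrdered) :
    (B.Telescope ns hmono h0).ProperlyOrdered :=
  ⟨(Equiv.existsUnique_congr Φ fun _ => isMinPath_teleEquiv_iff.symm).1 h.1,
    (Equiv.existsUnique_congr Φ fun _ => isMaxPath_teleEquiv_iff.symm).1 h.2⟩

variable (hmono h0) in
theorem simple_telescope (h : ∀ l c, ns (l + 1) = c + 1 → B.FullyConnected (ns l) c) :
    (B.Telescope ns hmono h0).Simple := by
  refine simple_of_forall_exists_edge fun l v w => ?_
  have hlt : ns l < ns (l + 1) := hmono l.lt_succ_self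
  have hend : ns (l + 1) = ns l + (ns (l + 1) - ns l - 1) + 1 := by omega
  obtain ⟨f, hf, hv, hw⟩ := h l _ hend v (B.castV hend w)
  exact ⟨⟨fun i => f (ns l + i), fun i hi => hf (ns l + i) (by omega) (by omega)⟩, hv,
    B.castV_eq_of_heq _ ((heq_of_eq hw).trans (B.castV_heq hend w))⟩

variable {T : B.PathSpace ≃ B.PathSpace}

theorem semiconj_teleEquiv : Function.Semiconj Φ T (Equiv.permCongr Φ T) := fun x => by
  rw [Equiv.permCongr_apply, Equiv.symm_apply_apply]

theorem IsVershik.telescope (hT : B.IsVershik T) :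
    (B.Telescope ns hmono h0).IsVershik (Equiv.permCongr Φ T) := by
  simp only [IsVershik, (teleEquiv (B := B) hmono h0).forall_congr_right.symm,
    ← semiconj_teleEquiv.eq, isMaxPath_teleEquiv_iff, isMinPath_teleEquiv_iff,
    pathLT_teleEquiv_iff]
  exact hT

theorem sameCoding_teleEquiv_iff {k : ℕ} :
    (B.Telescope ns hmono h0).SameCoding (Equiv.permCongr Φ T) k (Φ x) (Φ y) ↔
      B.SameCoding T (ns k) x y := by
  simp only [sameCoding_iff_forall_agreeBelow, ← (semiconj_iterZ semiconj_teleEquiv _).eq,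
    agreeBelow_teleEquiv_iff]

theorem hasCut_teleEquiv_iff {j : ℕ} :
    (B.Telescope ns hmono h0).HasCut (Equiv.permCongr Φ T) j (Φ x) (Φ y) ↔
      B.HasCut T (ns j) x y := by
  simp only [hasCut_iff_exists_minBelow, ← (semiconj_iterZ semiconj_teleEquiv _).eq,
    minBelow_teleEquiv_iff]

theorem timedBetween_telescope_iff {k l : ℕ} :
    TimedBetween (Equiv.permCongr Φ T) k l ↔ TimedBetween T (ns k) (ns l) := by
  simp only [TimedBetween, (teleEquiv (B := B) hmono h0).exists_congr_right.symm,
    sameCoding_teleEquiv_iff, hasCut_teleEquiv_iff]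
  refine ⟨fun h j => ?_, fun h j => h (ns j)⟩
  obtain ⟨x, y, hsame, hdiff, hcut⟩ := h j
  exact ⟨x, y, hsame, hdiff, hcut.mono hmono.le_apply⟩

end Telescope

end BDiagram

theorem Conjugate.symm {S S' : BVSystem} (h : Conjugate S S') : Conjugate S' S := by
  obtain ⟨φ, hφ, hφsymm, hT, hmin⟩ := h
  refine ⟨φ.symm, hφsymm, hφ, fun x => ?_, fun y hy => ?_⟩
  · rw [Equiv.symm_apply_eq, hT, φ.apply_symm_apply]
  · obtain ⟨x, hx, -⟩ := S.proper.1
    obtain rfl : y = φ x := S'.proper.1.unique hy (hmin x hx)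
    rwa [φ.symm_apply_apply]

theorem Conjugate.weaklyWellTimed {S S' : BVSystem} (h : Conjugate S S')
    (hw : S.B.WeaklyWellTimed S.T) : S'.B.WeaklyWellTimed S'.T := by
  obtain ⟨φ, hφ, hφsymm, hT, hmin⟩ := h
  refine BDiagram.weaklyWellTimed_iff.2 fun k' => ?_
  obtain ⟨k, hk⟩ := BDiagram.exists_timedBetween_map hφ hφsymm hT hmin k'
  obtain ⟨l, hl⟩ := BDiagram.weaklyWellTimed_iff.1 hw k
  exact hk l hl

namespace BVSystem

/-- The telescoping of a system along levels `ns` such that consecutive chosen levels are fully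
connected; the connections are what makes the telescoped diagram simple. -/
noncomputable def telescope (S : BVSystem) {ns : ℕ → ℕ} (hmono : StrictMono ns) (h0 : ns 0 = 0)
    (hconn : ∀ l c, ns (l + 1) = c + 1 → S.B.FullyConnected (ns l) c) : BVSystem where
  B := S.B.Telescope ns hmono h0
  T := (BDiagram.teleEquiv hmono h0).permCongr S.T
  proper := S.proper.telescope
  simple := BDiagram.simple_telescope hmono h0 hconn
  vershik := S.vershik.telescope

theorem conjugate_telescope (S : BVSystem) {ns : ℕ → ℕ} (hmono : StrictMono ns) (h0 : ns 0 = 0)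
    (hconn : ∀ l c, ns (l + 1) = c + 1 → S.B.FullyConnected (ns l) c) :
    Conjugate S (S.telescope hmono h0 hconn) :=
  ⟨BDiagram.teleEquiv hmono h0, BDiagram.continuous_teleEquiv, BDiagram.continuous_teleEquiv_symm,
    BDiagram.semiconj_teleEquiv, fun _ => BDiagram.isMinPath_teleEquiv_iff.2⟩

theorem exists_conjugate_wellTimed (S : BVSystem) (hw : S.B.WeaklyWellTimed S.T) :
    ∃ S' : BVSystem, Conjugate S S' ∧ S'.B.WellTimed S'.T := by
  choose G hG using BDiagram.weaklyWellTimed_iff.1 hw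
  obtain ⟨ns, hmono, h0, hns, hconn⟩ := S.simple.exists_levels G
  refine ⟨_, S.conjugate_telescope hmono h0 hconn, BDiagram.wellTimed_iff.2 fun k _ => ?_⟩
  exact BDiagram.timedBetween_telescope_iff.2 ((hG (ns k)).mono le_rfl (hns k))

theorem exists_conjugate_untimed (S : BVSystem) (hw : ¬ S.B.WeaklyWellTimed S.T) :
    ∃ S' : BVSystem, Conjugate S S' ∧ S'.B.Untimed S'.T := by
  obtain ⟨K, hK⟩ := not_forall.1 (BDiagram.weaklyWellTimed_iff.not.1 hw)
  obtain ⟨ns, hmono, h0, hns, hconn⟩ := S.simple.exists_levels fun _ => K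
  refine ⟨_, S.conjugate_telescope hmono h0 hconn, BDiagram.untimed_iff.2 fun k hk htimed => ?_⟩
  have hKk : K ≤ ns k := (hns 0).trans (hmono.monotone hk)
  exact hK ⟨_, (BDiagram.timedBetween_telescope_iff.1 htimed).mono hKk le_rfl⟩

end BVSystem

theorem nonexpansive_dichotomy_general (S : BVSystem) :
    Xor (∃ S' : BVSystem, Conjugate S S' ∧ S'.B.WellTimed S'.T)
        (∃ S' : BVSystem, Conjugate S S' ∧ S'.B.Untimed S'.T) := by
  by_cases hw : S.B.WeaklyWellTimed S.T
  · refine Or.inl ⟨S.exists_conjugate_wellTimed hw, fun ⟨_, hconj, huntimed⟩ => ?_⟩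
    exact huntimed.not_weaklyWellTimed (hconj.weaklyWellTimed hw)
  · refine Or.inr ⟨S.exists_conjugate_untimed hw, fun ⟨_, hconj, hwell⟩ => ?_⟩
    exact hw (hconj.symm.weaklyWellTimed hwell.weaklyWellTimed)

/-- Every nonexpansive simple, properly ordered Bratteli–Vershik
system is conjugate to a well timed system or conjugate to an untimed system, and
not both. -/
theorem nonexpansive_dichotomy (S : BVSystem) (hne : S.B.Nonexpansive S.T) :
    Xor' (∃ S' : BVSystem, Conjugate S S' ∧ S'.B.WellTimed S'.T)
         (∃ S' : BVSystem, Conjugate S S' ∧ S'.B.Untimed S'.T) :=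
  nonexpansive_dichotomy_general S
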